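/- arXiv:2201.00446 — 4 statements merged into one kernel-verified Lean document; each statement's English description precedes it below -/
import Mathlib

section
/- Let d ≥ 1 and let f, g : ℝ^d → ℝ be continuously differentiable, where f has L-Lipschitz gradient and satisfies the PL inequality with constant μ > 0, with f* = inf f and g* = inf g both finite. Suppose |g(x) − f(x)| ≤ η₀ for all x ∈ ℝ^d and |f* − g*| ≤ η*. Fix α ∈ (0, 1/L], x ∈ ℝ^d, ε ∈ ℝ^d, and set x⁺ = x − α(∇f(x) + ε). Then g(x⁺) − g* ≤ (1 − αμ)(f(x) − f*) + (α/2)‖ε‖² + η* + η₀. -/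
open scoped RealInnerProductSpace

/-- The descent lemma. -/
theorem descent_aux {E : Type*} [NormedAddCommGroup E] [InnerProductSpace ℝ E] [CompleteSpace E]
    (f : E → ℝ) (L : ℝ) (hf : Differentiable ℝ f)
    (hLip : ∀ x y, ‖gradient f x - gradient f y‖ ≤ L * ‖x - y‖) (x v : E) :
    f (x + v) ≤ f x + inner ℝ (gradient f x) v + L / 2 * ‖v‖ ^ 2 := by
  have hd : ∀ t : ℝ, HasDerivAt
      (fun t : ℝ => f (x + t • v) - t * inner ℝ (gradient f x) v - L / 2 * ‖v‖ ^ 2 * t ^ 2)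
      (inner ℝ (gradient f (x + t • v)) v - 1 * inner ℝ (gradient f x) v
        - L / 2 * ‖v‖ ^ 2 * (2 * t)) t := by
    intro t
    have h1 : HasDerivAt (fun t : ℝ => x + t • v) v t := by
      simpa using ((hasDerivAt_id t).smul_const v).const_add x
    have h2 := (hf (x + t • v)).hasGradientAt.hasFDerivAt.comp_hasDerivAt t h1
    have h3 : HasDerivAt (fun t : ℝ => t ^ 2) (2 * t) t := by
      simpa using hasDerivAt_pow 2 t
    refine HasDerivAt.sub (HasDerivAt.sub ?_ ((hasDerivAt_id t).mul_const _)) (h3.const_mul _)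
    simpa [Function.comp_def] using h2
  have hanti := antitoneOn_of_deriv_nonpos (convex_Icc (0 : ℝ) 1)
    (fun t _ => (hd t).continuousAt.continuousWithinAt)
    (fun t _ => (hd t).differentiableAt.differentiableWithinAt)
    (by
      intro t ht
      rw [interior_Icc] at ht
      rw [(hd t).deriv, one_mul, ← inner_sub_left]
      have h1 := real_inner_le_norm (gradient f (x + t • v) - gradient f x) v
      have h2 := hLip (x + t • v) x
      rw [add_sub_cancel_left, norm_smul, Real.norm_of_nonneg ht.1.le] at h2
      have h3 := mul_le_mul_of_nonneg_right h2 (norm_nonneg v)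
      nlinarith)
  have h := hanti (Set.left_mem_Icc.2 zero_le_one) (Set.right_mem_Icc.2 zero_le_one) zero_le_one
  simp only [one_smul, zero_smul, add_zero] at h
  linarith

/-- single-step suboptimality recursion for inexact gradient
descent on a drifting PL objective. -/
theorem stmt1 (d : ℕ) (hd : 1 ≤ d)
    (f g : EuclideanSpace ℝ (Fin d) → ℝ) (fstar gstar L μ η₀ ηs α : ℝ)
    (hL : 0 < L) (hμ : 0 < μ)
    (hf : ContDiff ℝ 1 f) (hg : ContDiff ℝ 1 g)
    (hLip : ∀ x y, ‖gradient f x - gradient f y‖ ≤ L * ‖x - y‖)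
    (hfstar : IsGLB (Set.range f) fstar)
    (hgstar : IsGLB (Set.range g) gstar)
    (hPL : ∀ x, μ * (f x - fstar) ≤ (1/2) * ‖gradient f x‖^2)
    (hdrift : ∀ x, |g x - f x| ≤ η₀)
    (hdrifts : |fstar - gstar| ≤ ηs)
    (hα : 0 < α) (hα' : α ≤ 1/L)
    (x ε : EuclideanSpace ℝ (Fin d)) :
    g (x - α • (gradient f x + ε)) - gstar ≤
      (1 - α*μ) * (f x - fstar) + (α/2) * ‖ε‖^2 + ηs + η₀ := by
  have h := descent_aux f L (hf.differentiable (by norm_num)) hLip x (-(α • (gradient f x + ε)))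
  rw [← sub_eq_add_neg, norm_neg, norm_smul, inner_neg_right, inner_smul_right, inner_add_right,
    Real.norm_of_nonneg hα.le, mul_pow, norm_add_sq_real, real_inner_self_eq_norm_sq] at h
  have hLα : L * α ≤ 1 := by
    rw [le_div_iff₀ hL] at hα'
    linarith
  have hN : 0 ≤ ‖gradient f x‖ ^ 2 + 2 * inner ℝ (gradient f x) ε + ‖ε‖ ^ 2 := by
    rw [← norm_add_sq_real]; positivity
  have h1 := mul_le_mul_of_nonneg_right hLα (mul_nonneg hα.le hN)
  have h2 := mul_le_mul_of_nonneg_left (hPL x) hα.le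
  have h3 := (abs_le.1 (hdrift (x - α • (gradient f x + ε)))).2
  have h4 := (abs_le.1 hdrifts).2
  nlinarith
end

section
/- Let N ≥ 1 and let F : ℝ^N → ℝ and φ : ℝ^N → ℝ be functions with nonempty minimiser sets X*_F = argmin F and X*_φ = argmin φ and minimum values F* = 0 (i.e. F is nonnegative with infimum 0 attained) and φ* = min φ. Suppose F is differentiable with L_F-Lipschitz gradient and φ is differentiable with L_φ-Lipschitz gradient. Then the composite function f̂ = F + φ satisfies inf f̂ ≤ φ* + (min(L_F, L_φ)/2)·D², where D = inf { ‖x*_φ − x*_F‖ : x*_φ ∈ X*_φ, x*_F ∈ X*_F } is the distance between the two minimiser sets. -/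
open scoped RealInnerProductSpace

theorem descent_aux_s6 {N : ℕ} (h : EuclideanSpace ℝ (Fin N) → ℝ) (L : ℝ)
    (hd : Differentiable ℝ h)
    (hL : ∀ x y, ‖gradient h x - gradient h y‖ ≤ L * ‖x - y‖)
    (x y : EuclideanSpace ℝ (Fin N)) (hx : ∀ z, h x ≤ h z) :
    h y ≤ h x + L / 2 * ‖y - x‖ ^ 2 := by
  have hg0 : gradient h x = 0 := by
    have hmin : IsLocalMin h x := Filter.Eventually.of_forall hx
    simp [gradient, hmin.fderiv_eq_zero]
  set v := y - x with hv
  have hder : ∀ t : ℝ, HasDerivAt (fun t : ℝ => h (x + t • v) - L / 2 * ‖v‖ ^ 2 * t ^ 2)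
      (⟪gradient h (x + t • v), v⟫ - L * ‖v‖ ^ 2 * t) t := by
    intro t
    have h1 : HasDerivAt (fun t : ℝ => x + t • v) v t := by
      simpa using ((hasDerivAt_id t).smul_const v).const_add x
    have h2 := (hd (x + t • v)).hasGradientAt.hasFDerivAt.comp_hasDerivAt t h1
    have h3 := ((hasDerivAt_id t).pow 2).const_mul (L / 2 * ‖v‖ ^ 2)
    refine (h2.sub h3).congr_deriv ?_
    simp
    ring
  have hanti : AntitoneOn (fun t : ℝ => h (x + t • v) - L / 2 * ‖v‖ ^ 2 * t ^ 2)
      (Set.Icc 0 1) := by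
    refine antitoneOn_of_deriv_nonpos (convex_Icc 0 1)
      (fun t _ => (hder t).continuousAt.continuousWithinAt)
      (fun t _ => (hder t).differentiableAt.differentiableWithinAt) ?_
    intro t ht
    rw [interior_Icc] at ht
    rw [(hder t).deriv]
    have h1 := real_inner_le_norm (gradient h (x + t • v)) v
    have h2 := hL (x + t • v) x
    rw [hg0, sub_zero, add_sub_cancel_left, norm_smul, Real.norm_of_nonneg ht.1.le] at h2
    have h3 := mul_le_mul_of_nonneg_right h2 (norm_nonneg v)
    nlinarith
  have := hanti (Set.left_mem_Icc.2 zero_le_one) (Set.right_mem_Icc.2 zero_le_one) zero_le_one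
  simp [hv] at this
  rw [← hv] at this
  linarith

/-- bound on the infimum of the composite function `F + φ` in
terms of `φ*` and the distance between the minimiser sets of `F` and `φ`
(Lemma 2 of the paper). -/
theorem stmt6 (N : ℕ) (hN : 1 ≤ N)
    (F φ : EuclideanSpace ℝ (Fin N) → ℝ) (φstar LF Lφ : ℝ)
    (hF : Differentiable ℝ F) (hφ : Differentiable ℝ φ)
    (hFLip : ∀ x y, ‖gradient F x - gradient F y‖ ≤ LF * ‖x - y‖)
    (hφLip : ∀ x y, ‖gradient φ x - gradient φ y‖ ≤ Lφ * ‖x - y‖)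
    (hF0 : ∀ x, 0 ≤ F x)
    (hXF : {x : EuclideanSpace ℝ (Fin N) | F x = 0}.Nonempty)
    (hφlb : ∀ x, φstar ≤ φ x)
    (hXφ : {x : EuclideanSpace ℝ (Fin N) | φ x = φstar}.Nonempty) :
    sInf (Set.range fun x => F x + φ x) ≤
      φstar + (min LF Lφ / 2) *
        (sInf ((fun p : EuclideanSpace ℝ (Fin N) × EuclideanSpace ℝ (Fin N) =>
            ‖p.1 - p.2‖) ''
          ({x | φ x = φstar} ×ˢ {x | F x = 0})))^2 := by
  have hbdd : BddBelow (Set.range fun x => F x + φ x) := by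
    refine ⟨φstar, ?_⟩
    rintro _ ⟨x, rfl⟩
    have h1 := hF0 x
    have h2 := hφlb x
    simp only
    linarith
  have hne := (hXφ.prod hXF).image
    (fun p : EuclideanSpace ℝ (Fin N) × EuclideanSpace ℝ (Fin N) => ‖p.1 - p.2‖)
  have hb : BddBelow ((fun p : EuclideanSpace ℝ (Fin N) × EuclideanSpace ℝ (Fin N) =>
      ‖p.1 - p.2‖) '' ({x | φ x = φstar} ×ˢ {x | F x = 0})) := by
    refine ⟨0, ?_⟩
    rintro _ ⟨p, _, rfl⟩
    exact norm_nonneg _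
  obtain ⟨u, -, hu, hmem⟩ := exists_seq_tendsto_sInf hne hb
  refine ge_of_tendsto' (((hu.pow 2).const_mul (min LF Lφ / 2)).const_add φstar) ?_
  intro n
  obtain ⟨⟨a, b⟩, ⟨ha, hb0⟩, hab⟩ := hmem n
  simp only [Set.mem_setOf_eq] at ha hb0 hab
  rw [← hab]
  rcases min_choice LF Lφ with h | h
  · rw [h]
    refine (csInf_le hbdd ⟨a, rfl⟩).trans ?_
    have := descent_aux_s6 F LF hF hFLip b a (fun z => hb0 ▸ hF0 z)
    simp only
    linarith
  · rw [h]
    refine (csInf_le hbdd ⟨b, rfl⟩).trans ?_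
    have := descent_aux_s6 φ Lφ hφ hφLip a b (fun z => ha ▸ hφlb z)
    rw [norm_sub_rev] at this
    simp only
    linarith
end

section
/- Let d ≥ 1 and let f : ℝ^d → ℝ be continuously differentiable with L-Lipschitz gradient. Let x ∈ ℝ^d and let y₁, …, y_m ∈ ℝ^d be points, all distinct from x, with unit directions v_j = (y_j − x)/‖y_j − x‖, slopes s_j = (f(y_j) − f(x))/‖y_j − x‖, and a_j = (L/2)‖y_j − x‖, and let A ∈ ℝ^{m×d} have rows v_jᵀ. Suppose there is σ > 0 with ‖Az‖ ≥ σ‖z‖ for all z ∈ ℝ^d (i.e. the smallest singular value of A is at least σ). Then for any g ∈ ℝ^d, the gradient estimation error satisfies ‖g − ∇f(x)‖ ≤ m(g)/σ, where m(g)² = Σ_{j=1}^{m} (|s_j − gᵀv_j| + a_j)². -/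
open scoped RealInnerProductSpace

theorem descent_aux_s15 {d : ℕ} (f : EuclideanSpace ℝ (Fin d) → ℝ) (L : ℝ)
    (hf : ContDiff ℝ 1 f)
    (hLip : ∀ x y, ‖gradient f x - gradient f y‖ ≤ L * ‖x - y‖)
    (x w : EuclideanSpace ℝ (Fin d)) :
    |f (x + w) - f x - ⟪gradient f x, w⟫| ≤ L / 2 * ‖w‖ ^ 2 := by
  have hdiff : Differentiable ℝ f := hf.differentiable (by norm_num)
  have hder : ∀ t : ℝ, HasDerivAt (fun t : ℝ => f (x + t • w) - f x - t * ⟪gradient f x, w⟫)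
      (⟪gradient f (x + t • w) - gradient f x, w⟫) t := by
    intro t
    have h1 : HasDerivAt (fun t : ℝ => x + t • w) w t := by
      simpa using ((hasDerivAt_id t).smul_const w).const_add x
    have h2 := ((hdiff (x + t • w)).hasGradientAt.hasFDerivAt).comp_hasDerivAt t h1
    have h3 := (h2.sub_const (f x)).sub ((hasDerivAt_id t).mul_const ⟪gradient f x, w⟫)
    refine h3.congr_deriv ?_
    simp [inner_sub_left]
  have hB : ∀ t : ℝ, HasDerivAt (fun t : ℝ => L / 2 * ‖w‖ ^ 2 * t ^ 2) (L * ‖w‖ ^ 2 * t) t := by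
    intro t
    refine ((hasDerivAt_pow 2 t).const_mul (L / 2 * ‖w‖ ^ 2)).congr_deriv ?_
    norm_num
    ring
  have key := image_norm_le_of_norm_deriv_right_le_deriv_boundary (a := 0) (b := 1)
    (f := fun t : ℝ => f (x + t • w) - f x - t * ⟪gradient f x, w⟫)
    (fun t _ => (hder t).continuousAt.continuousWithinAt)
    (fun t _ => (hder t).hasDerivWithinAt)
    (B := fun t : ℝ => L / 2 * ‖w‖ ^ 2 * t ^ 2) (by simp) hB
    (by
      intro t ht
      refine (norm_inner_le_norm _ _).trans ?_
      have := hLip (x + t • w) x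
      rw [add_sub_cancel_left, norm_smul, Real.norm_of_nonneg ht.1] at this
      nlinarith [mul_le_mul_of_nonneg_right this (norm_nonneg w)])
    (Set.right_mem_Icc.2 zero_le_one)
  simpa using key

/-- gradient estimation error bound: if the matrix `A` with
rows `vⱼᵀ = (yⱼ − x)ᵀ/‖yⱼ − x‖` has smallest singular value at least `σ`
(i.e. `σ‖z‖ ≤ ‖Az‖ = (Σⱼ ⟪vⱼ, z⟫²)^{1/2}` for all `z`), then for any
candidate gradient `g`, `‖g − ∇f(x)‖ ≤ m(g)/σ`. -/
theorem stmt15 (d m : ℕ) (hd : 1 ≤ d)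
    (f : EuclideanSpace ℝ (Fin d) → ℝ) (L σ : ℝ) (hσ : 0 < σ)
    (hf : ContDiff ℝ 1 f)
    (hLip : ∀ x y, ‖gradient f x - gradient f y‖ ≤ L * ‖x - y‖)
    (x : EuclideanSpace ℝ (Fin d)) (y : Fin m → EuclideanSpace ℝ (Fin d))
    (hy : ∀ j, y j ≠ x)
    (hA : ∀ z : EuclideanSpace ℝ (Fin d),
      σ * ‖z‖ ≤ Real.sqrt (∑ j, ⟪‖y j - x‖⁻¹ • (y j - x), z⟫^2))
    (g : EuclideanSpace ℝ (Fin d)) :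
    ‖g - gradient f x‖ ≤
      Real.sqrt (∑ j,
        (|(f (y j) - f x) / ‖y j - x‖ - ⟪g, ‖y j - x‖⁻¹ • (y j - x)⟫|
          + (L/2) * ‖y j - x‖)^2) / σ := by
  rw [le_div_iff₀ hσ, mul_comm]
  refine (hA _).trans (Real.sqrt_le_sqrt (Finset.sum_le_sum fun j _ => ?_))
  have hn : 0 < ‖y j - x‖ := norm_pos_iff.2 (sub_ne_zero.2 (hy j))
  have h := descent_aux_s15 f L hf hLip x (y j - x)
  rw [add_sub_cancel] at h
  refine sq_le_sq' ?_ ?_ <;> clear hA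
  all_goals
    rw [inner_smul_left, inner_smul_right, real_inner_comm (g - gradient f x), inner_sub_left]
    simp only [conj_trivial]
    set n := ‖y j - x‖
    set p := ⟪g, y j - x⟫
    set q := ⟪gradient f x, y j - x⟫
    have h2 : |(f (y j) - f x) / n - n⁻¹ * q| ≤ L / 2 * n := by
      have e : (f (y j) - f x) / n - n⁻¹ * q = (f (y j) - f x - q) / n := by
        field_simp
      rw [e, abs_div, abs_of_pos hn, div_le_iff₀ hn]
      linarith
    have h3 := abs_le.1 h2
    have h4 := le_abs_self ((f (y j) - f x) / n - n⁻¹ * p)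
    have h5 := neg_abs_le ((f (y j) - f x) / n - n⁻¹ * p)
    rw [mul_sub]
    linarith
end

section
/- Let d ≥ 1, m ≥ 1, let v₁, …, v_m ∈ ℝ^d be unit vectors, let s₁, …, s_m ∈ ℝ and a₁, …, a_m ≥ 0, and let P = { z ∈ ℝ^d : |v_jᵀz − s_j| ≤ a_j for all j }. Let g ∈ ℝ^d be any point such that w_j := |s_j − gᵀv_j| + a_j > 0 for every j, and let B ∈ ℝ^{m×d} be the matrix whose j-th row is v_jᵀ / (√m · w_j). Then every y ∈ P satisfies ‖B(y − g)‖ ≤ 1; that is, P is contained in the ellipsoid { z ∈ ℝ^d : ‖B(z − g)‖ ≤ 1 }. -/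
open scoped RealInnerProductSpace

/-- the 'row scaling' ellipsoidal bound: the slab polyhedron
`P = {z : |vⱼᵀz − sⱼ| ≤ aⱼ}` is contained in the ellipsoid
`{z : ‖B(z − g)‖ ≤ 1}`, where the `j`-th row of `B` is
`vⱼᵀ/(√m·wⱼ)` with `wⱼ = |sⱼ − gᵀvⱼ| + aⱼ`, so that
`‖B(z − g)‖² = (1/m)·Σⱼ ⟪vⱼ, z − g⟫²/wⱼ²`. -/
theorem stmt16 (d m : ℕ) (hd : 1 ≤ d) (hm : 1 ≤ m)
    (v : Fin m → EuclideanSpace ℝ (Fin d)) (hv : ∀ j, ‖v j‖ = 1)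
    (s a : Fin m → ℝ) (ha : ∀ j, 0 ≤ a j)
    (g : EuclideanSpace ℝ (Fin d))
    (hw : ∀ j, 0 < |s j - ⟪g, v j⟫| + a j) :
    ∀ y ∈ {z : EuclideanSpace ℝ (Fin d) | ∀ j, |⟪v j, z⟫ - s j| ≤ a j},
      (1/(m:ℝ)) * ∑ j, ⟪v j, y - g⟫^2 / (|s j - ⟪g, v j⟫| + a j)^2 ≤ 1 := by
  intro y hy
  have hm' : (0 : ℝ) < m := by exact_mod_cast hm
  have key : ∀ j ∈ Finset.univ,
      ⟪v j, y - g⟫^2 / (|s j - ⟪g, v j⟫| + a j)^2 ≤ (1 : ℝ) := by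
    intro j _
    rw [div_le_one (pow_pos (hw j) 2)]
    apply sq_le_sq'
    all_goals
      have h1 := abs_le.mp (hy j)
      have h2 := le_abs_self (s j - ⟪g, v j⟫)
      have h3 := neg_abs_le (s j - ⟪g, v j⟫)
      rw [inner_sub_right, real_inner_comm g (v j)] at *
      linarith [h1.1, h1.2]
  have hs := Finset.sum_le_sum key
  simp only [Finset.sum_const, Finset.card_univ, Fintype.card_fin, nsmul_eq_mul, mul_one] at hs
  rw [one_div, inv_mul_le_iff₀ hm', mul_one]
  exact hs
end
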